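/- arXiv:2010.08599 — 2 statements merged into one kernel-verified Lean document; each statement's English description precedes it below -/
import Mathlib

section
/- Let φ : Prop and A : Type u. The type φ → Cl_φ A has exactly one element (it is nonempty and a subsingleton); in particular, if φ holds then Cl_φ A has exactly one element. That is, Op_φ (Cl_φ A) ≅ 1: the open and closed modalities for φ are complementary. -/
/-- The relation generating the pushout defining the closed modality:
`Sum.inl a` is related to `Sum.inr ⟨h⟩` for every `a : A` and `h : φ`. -/
def ClRel (φ : Prop) (A : Type u) : A ⊕ PLift φ → A ⊕ PLift φ → Prop :=
  fun x y => ∃ (a : A) (h : φ), x = Sum.inl a ∧ y = Sum.inr ⟨h⟩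

/-- The closed modality `Cl φ A`, the pushout `A ⊔_{A × φ} φ`. -/
def Cl (φ : Prop) (A : Type u) : Type u := Quot (ClRel φ A)

/-- If `φ` holds, the pushout is a cone with apex the point coming from `φ`: every element equals
that point, either through a generating relation or by proof irrelevance. -/
theorem Cl.eq_inr {φ : Prop} {A : Type u} (h : φ) (x : Cl φ A) :
    x = Quot.mk _ (Sum.inr ⟨h⟩) := by
  induction x using Quot.ind with
  | mk x =>
    cases x with
    | inl a => exact Quot.sound ⟨a, h, rfl, rfl⟩
    | inr _ => rfl

/-- `Op_φ (Cl_φ A) ≅ 1`: the type `φ → Cl φ A` has exactly one element;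
in particular, if `φ` holds then `Cl φ A` has exactly one element. -/
theorem op_cl_complementary (φ : Prop) (A : Type u) :
    (Nonempty (φ → Cl φ A) ∧ Subsingleton (φ → Cl φ A)) ∧
      (φ → Nonempty (Cl φ A) ∧ Subsingleton (Cl φ A)) := by
  have key : φ → Nonempty (Cl φ A) ∧ Subsingleton (Cl φ A) := fun h =>
    ⟨⟨Quot.mk _ (Sum.inr ⟨h⟩)⟩,
      ⟨fun x y => (Cl.eq_inr h x).trans (Cl.eq_inr h y).symm⟩⟩
  exact ⟨⟨⟨fun h => Quot.mk _ (Sum.inr ⟨h⟩)⟩,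
    ⟨fun _ _ => funext fun h => (key h).2.elim _ _⟩⟩, key⟩
end

section
/- Let φ : Prop and A B : Type u. The canonical map Cl_φ (A × B) → Cl_φ A × Cl_φ B, induced by the functorial action of Cl_φ on the two product projections (where Cl_φ sends a function f : X → Y to the map Cl_φ X → Cl_φ Y descending from Sum.map f id), is bijective (the closed modality preserves binary products, part of its left exactness). -/
/-- The functorial action of `Cl φ` on a function, descending from `Sum.map f id`. -/
def clMap (φ : Prop) {A B : Type u} (f : A → B) : Cl φ A → Cl φ B :=
  Quot.map (Sum.map f id) (by
    rintro x y ⟨a, h, rfl, rfl⟩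
    exact ⟨f a, h, rfl, rfl⟩)

/-- The unit `X → Cl φ X` of the closed modality. -/
def clUnit (φ : Prop) {X : Type u} (x : X) : Cl φ X :=
  Quot.mk _ (Sum.inl x)

theorem cl_eq_point {φ : Prop} {X : Type u} (h : φ) (x : Cl φ X) :
    x = Quot.mk _ (Sum.inr ⟨h⟩) := by
  rcases x with ⟨a | ⟨_⟩⟩
  · exact Quot.sound ⟨a, h, rfl, rfl⟩
  · rfl

theorem clUnit_bijective {φ : Prop} (h : ¬φ) (X : Type u) :
    Function.Bijective (clUnit φ : X → Cl φ X) := by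
  -- Without a proof of `φ` there is nothing to glue, so the unit has a left inverse.
  let r : Cl φ X → X := Quot.lift (Sum.elim id fun p => (h p.down).elim) (by
    rintro _ _ ⟨_, p, _⟩
    exact (h p).elim)
  refine ⟨Function.LeftInverse.injective (g := r) fun _ => rfl, ?_⟩
  rintro ⟨a | ⟨p⟩⟩
  · exact ⟨a, rfl⟩
  · exact (h p.down).elim

/-- the closed modality preserves binary products: the canonical map
`Cl φ (A × B) → Cl φ A × Cl φ B` induced by the two projections is bijective. -/
theorem cl_preserves_products (φ : Prop) (A B : Type u) :
    Function.Bijective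
      (fun x : Cl φ (A × B) => (clMap φ Prod.fst x, clMap φ Prod.snd x)) := by
  by_cases h : φ
  · refine ⟨fun x y _ => (cl_eq_point h x).trans (cl_eq_point h y).symm, fun y => ?_⟩
    exact ⟨Quot.mk _ (Sum.inr ⟨h⟩),
      Prod.ext (cl_eq_point h y.1).symm (cl_eq_point h y.2).symm⟩
  · -- Naturality of the unit holds by definition: `clMap φ f (clUnit φ x)` is `clUnit φ (f x)`.
    refine (Function.Bijective.of_comp_iff _ (clUnit_bijective h (A × B))).mp ?_
    exact (clUnit_bijective h A).prodMap (clUnit_bijective h B)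
end
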